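/- arXiv:1004.0094 — 6 statements merged into one kernel-verified Lean document; each statement's English description precedes it below -/
import Mathlib

section
/- Let n ≥ 1, let c be a positive natural number, and let M be an n×n matrix with natural number entries such that M² = c·I_n. Then there exists a permutation σ of {1,…,n} with σ∘σ = id such that M_{ij} = 0 whenever j ≠ σ(i), and M_{i,σ(i)} · M_{σ(i),i} = c for every i. (Equivalently, M is conjugate by a permutation matrix to a direct sum of 1×1 blocks (a) with a² = c and 2×2 blocks with zero diagonal and antidiagonal entries a, b satisfying ab = c.) -/
/-!
Since the diagonal of `M * M` is `c > 0`, every `i` has some `j` with `M i j` and `M j i` both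
nonzero. If `M i k` is nonzero as well, then `M j i * M i k` is a nonzero summand of the entry
`(M * M) j k`; natural numbers do not cancel, so this entry is nonzero and `k = j`. Hence row `i`
has exactly one nonzero entry, in column `σ i := j`, and `M (σ i) i ≠ 0` gives `σ (σ i) = i`.
-/

/-- Any square matrix over `ℕ` whose square is `c` times the identity matrix is, up to
simultaneous permutation of rows and columns, a direct sum of `1 × 1` blocks `(a)` with
`a² = c` and `2 × 2` blocks with zero diagonal whose antidiagonal entries `a, b` satisfy
`a * b = c`.  This is expressed by an involutive permutation `σ` such that all entries of
`M` away from the "graph" of `σ` vanish and `M i (σ i) * M (σ i) i = c` for all `i`. -/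
theorem matrix_sq_eq_nat_smul_one (n : ℕ) (hn : 1 ≤ n) (c : ℕ) (hc : 0 < c)
    (M : Matrix (Fin n) (Fin n) ℕ)
    (hM : M * M = (c : ℕ) • (1 : Matrix (Fin n) (Fin n) ℕ)) :
    ∃ σ : Equiv.Perm (Fin n),
      (∀ i, σ (σ i) = i) ∧
      (∀ i j, j ≠ σ i → M i j = 0) ∧
      (∀ i, M i (σ i) * M (σ i) i = c) := by
  have entry : ∀ i k, ∑ j, M i j * M j k = if i = k then c else 0 := by
    intro i k
    have h := congrFun (congrFun hM i) k
    simpa [Matrix.mul_apply, Matrix.one_apply] using h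
  have supp : ∀ i, ∃ j, M i j ≠ 0 ∧ M j i ≠ 0 := by
    intro i
    have h : ∑ j, M i j * M j i ≠ 0 := by
      rw [entry, if_pos rfl]
      exact hc.ne'
    obtain ⟨j, -, hj⟩ := Finset.exists_ne_zero_of_sum_ne_zero h
    exact ⟨j, left_ne_zero_of_mul hj, right_ne_zero_of_mul hj⟩
  choose f hf hf' using supp
  have uniq : ∀ i k, M i k ≠ 0 → k = f i := by
    intro i k hk
    by_contra hne
    have h := entry (f i) k
    rw [if_neg (Ne.symm hne), Finset.sum_eq_zero_iff] at h
    exact mul_ne_zero (hf' i) hk (h i (Finset.mem_univ i))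
  have invol : Function.Involutive f := fun i => (uniq (f i) i (hf' i)).symm
  have zero : ∀ i j, j ≠ f i → M i j = 0 := fun i j hj => by
    by_contra h
    exact hj (uniq i j h)
  refine ⟨invol.toPerm f, invol, zero, fun i => ?_⟩
  have h := entry i i
  rw [if_pos rfl, Finset.sum_eq_single (f i)] at h
  · exact h
  · intro j _ hj
    rw [zero i j hj, zero_mul]
  · exact fun hi => absurd (Finset.mem_univ _) hi
end

section
/- Let F be a selfadjoint endofunctor of A-fdmod satisfying F∘F ≅ F, and let L be a simple finite-dimensional A-module. Then either F L = 0 or F L ≅ L. -/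
/-!
The functor `F` is both a left and a right adjoint, so it preserves zero morphisms and epimorphisms.
Let `F L ≠ 0`. Then
`0 ≠ End (F L) ≃ Hom (L, F (F L)) ≃ Hom (L, F L) ≃ Hom (F L, L)`,
which provides a nonzero, hence epic, morphism `g : F L ⟶ L`. As `F` preserves epimorphisms,
`F g : F (F L) ⟶ F L` is epic; since `F (F L) ≅ F L` is noetherian, `F g` is an isomorphism.
Finally `g` is monic, hence an isomorphism: if
`h : Z ⟶ F L` satisfies `h ≫ g = 0`, then `F h ≫ F g = 0`, so `F h = 0`. The adjunct `F Z ⟶ L` of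
`h` factors through `F h`, so it vanishes, and therefore `h = 0`.
-/

open CategoryTheory CategoryTheory.Limits

noncomputable section
set_option linter.unusedSectionVars false
set_option linter.unusedVariables false

universe u

variable (𝕜 : Type u) [Field 𝕜] [IsAlgClosed 𝕜]
variable (A : Type u) [Ring A] [Algebra 𝕜 A] [FiniteDimensional 𝕜 A]

/-- The algebra `A` is *basic*: every simple `A`-module is one-dimensional over `𝕜`. -/
def IsBasicAlgebra : Prop :=
  ∀ (M : Type u) [AddCommGroup M] [Module 𝕜 M] [Module A M] [IsScalarTower 𝕜 A M],
    IsSimpleModule A M → Module.finrank 𝕜 M = 1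

/-- A functor is *selfadjoint* if it admits itself as a right adjoint. -/
def IsSelfadjointFunctor (F : FGModuleCat A ⥤ FGModuleCat A) : Prop := Nonempty (F ⊣ F)

/-- Finitely generated modules over a noetherian ring are Hopfian objects. -/
lemma mono_of_epi_endo {R : Type u} [Ring R] [IsNoetherianRing R] {M : FGModuleCat R}
    (e : M ⟶ M) [Epi e] : Mono e := by
  have h1 : Epi ((forget₂ (FGModuleCat R) (ModuleCat R)).map e) := inferInstance
  have h2 : Function.Surjective e.hom.hom := (ModuleCat.epi_iff_surjective _).1 h1
  have h3 : Function.Injective e.hom.hom :=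
    IsNoetherian.injective_of_surjective_endomorphism e.hom.hom h2
  have h4 : Mono ((forget₂ (FGModuleCat R) (ModuleCat R)).map e) :=
    (ModuleCat.mono_iff_injective _).2 h3
  exact (forget₂ (FGModuleCat R) (ModuleCat R)).mono_of_mono_map h4

lemma epi_of_ne_zero_of_isSimpleModule {R : Type u} [Ring R] [IsNoetherianRing R]
    {M L : FGModuleCat R} (hL : IsSimpleModule R L) (g : M ⟶ L) (hg : g ≠ 0) : Epi g := by
  have h1 : g.hom.hom ≠ 0 := fun h => hg (FGModuleCat.hom_ext h)
  have h2 : Function.Surjective g.hom.hom := LinearMap.surjective_of_ne_zero h1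
  have h3 : Epi ((forget₂ (FGModuleCat R) (ModuleCat R)).map g) :=
    (ModuleCat.epi_iff_surjective _).2 h2
  exact (forget₂ (FGModuleCat R) (ModuleCat R)).epi_of_epi_map h3

/-- If `F` is a selfadjoint idempotent endofunctor of `A`-fdmod and `L` is a simple
module, then `F L` is either zero or isomorphic to `L`. -/
theorem selfadjoint_idempotent_on_simple (hbasic : IsBasicAlgebra 𝕜 A)
    (F : FGModuleCat A ⥤ FGModuleCat A) (hF : IsSelfadjointFunctor A F)
    (hFF : Nonempty (F ⋙ F ≅ F))
    (L : FGModuleCat A) (hL : IsSimpleModule A L) :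
    IsZero (F.obj L) ∨ Nonempty (F.obj L ≅ L) := by
  have : IsNoetherianRing A := IsNoetherianRing.of_finite 𝕜 A
  obtain ⟨adj⟩ := hF
  obtain ⟨φ⟩ := hFF
  have hl : F.IsLeftAdjoint := adj.isLeftAdjoint
  refine or_iff_not_imp_left.2 fun hne => ?_
  let g : F.obj L ⟶ L :=
    (adj.homEquiv L L).symm (adj.homEquiv L (F.obj L) (𝟙 _) ≫ φ.hom.app L)
  have hg : g ≠ 0 := by
    intro h
    apply hne
    rw [IsZero.iff_id_eq_zero]
    have h1 : adj.homEquiv L (F.obj L) (𝟙 _) ≫ φ.hom.app L = 0 := by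
      have h3 := congrArg (adj.homEquiv L L) h
      rwa [Equiv.apply_symm_apply, Adjunction.homEquiv_unit _ L L 0, F.map_zero, comp_zero] at h3
    have h2 : adj.homEquiv L (F.obj L) (𝟙 _) = 0 := by
      rwa [← cancel_mono (φ.hom.app L), zero_comp]
    apply (adj.homEquiv L (F.obj L)).injective
    rw [h2, Adjunction.homEquiv_unit, F.map_zero, comp_zero]
  have hepi : Epi g := epi_of_ne_zero_of_isSimpleModule hL g hg
  -- `F g` becomes an epic endomorphism of `F L` after precomposition with `F L ≅ F (F L)`.
  have hmono : Mono (φ.inv.app L ≫ F.map g) := mono_of_epi_endo _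
  have hFg : Mono (F.map g) := by
    have h : F.map g = φ.hom.app L ≫ φ.inv.app L ≫ F.map g := by simp
    rw [h]
    infer_instance
  have hgm : Mono g := by
    refine Preadditive.mono_of_cancel_zero _ fun {Z} h hh => ?_
    have h1 : F.map h = 0 := by
      rw [← cancel_mono (F.map g), ← F.map_comp, hh, F.map_zero, zero_comp]
    apply (adj.homEquiv Z L).symm.injective
    rw [Adjunction.homEquiv_counit, Adjunction.homEquiv_counit, h1, F.map_zero]
  have : IsIso g := isIso_of_mono_of_epi g
  exact ⟨asIso g⟩

end
end

section
/- Assume that A is connected, i.e., the only central idempotents of A are 0 and 1. Then every selfadjoint endofunctor F of A-fdmod satisfying F∘F ≅ F is isomorphic either to the identity functor or to the zero functor. -/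
/-!
The proof works with the unit `η : 𝟭 ⟶ F ⋙ F` and the counit `ε : F ⋙ F ⟶ 𝟭` of the adjunction
`F ⊣ F`. Their composite `η ≫ ε` is a natural endomorphism of the identity functor, hence is given
by a central element `c` of `A`. The centre of `A` is a commutative Artinian ring, so, `A` being
connected, `c` is either nilpotent or invertible.

The finiteness input is `isIso_of_retraction`: a split monomorphism between isomorphic finite-length
modules is an isomorphism.

* By the triangle identities `F(η_M)` is a split mono and `F(ε_M)` a split epi. They go between
  `F M` and `F (F (F M)) ≅ F M`, so both are isomorphisms, and `F` sends multiplication by `c` on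
  `M` to an automorphism of `F M`. If `c ^ n = 0`, then `0 = F(c ^ n)` is an automorphism of `F M`,
  so `F M = 0`.
* If `c` is invertible, every `η_M` is a split mono. Then `η_{F M} : F M ⟶ F (F (F M))` is an
  isomorphism, and since `M` is a retract of `F (F M)`, so is `η_M`. Hence `𝟭 ≅ F ⋙ F ≅ F`.

The universe of the modules is independent of that of `A`. If `A` is too large to have a copy among
the modules, then there is no nonzero module in that universe and `F` is zero.
-/

open CategoryTheory CategoryTheory.Limits

noncomputable section
set_option linter.unusedSectionVars false
set_option linter.unusedVariables false

universe u

variable (𝕜 : Type u) [Field 𝕜] [IsAlgClosed 𝕜]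
variable (A : Type u) [Ring A] [Algebra 𝕜 A] [FiniteDimensional 𝕜 A]

universe v

/-- A split monomorphism between isomorphic finitely generated modules over an Artinian ring is an
isomorphism, because an injective endomorphism of an Artinian module is bijective. -/
theorem isIso_of_retraction {B : Type*} [Ring B] [IsArtinianRing B] {X Y : FGModuleCat B}
    (f : X ⟶ Y) (g : Y ⟶ X) (h : f ≫ g = 𝟙 X) (i : Y ≅ X) : IsIso f := by
  have hinj : Function.Injective (f ≫ i.hom).hom.hom := by
    have h2 : (f ≫ i.hom) ≫ (i.inv ≫ g) = 𝟙 X := by simp [h]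
    intro x y hxy
    have hx : (i.inv ≫ g).hom.hom ((f ≫ i.hom).hom.hom x) = x :=
      congrArg (fun k : X ⟶ X => k.hom.hom x) h2
    have hy : (i.inv ≫ g).hom.hom ((f ≫ i.hom).hom.hom y) = y :=
      congrArg (fun k : X ⟶ X => k.hom.hom y) h2
    rw [← hx, hxy, hy]
  have : IsArtinian B X := inferInstance
  have hbij := IsArtinian.bijective_of_injective_endomorphism _ hinj
  have : IsIso (f ≫ i.hom) := by
    let e := LinearEquiv.ofBijective (f ≫ i.hom).hom.hom hbij
    exact (e.toFGModuleCatIso).isIso_hom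
  exact IsIso.of_isIso_comp_right f i.hom

/-- The natural endomorphisms of the identity functor of the category of finitely generated modules
are the multiplications by central elements. Since modules and ring may live in different universes,
smallness of the ring ensures that the regular module belongs to the category. -/
theorem exists_central_of_endo_id {B : Type u} [Ring B] [Small.{v} B]
    (z : 𝟭 (FGModuleCat.{v} B) ⟶ 𝟭 (FGModuleCat.{v} B)) :
    ∃ c : B, (∀ a, c * a = a * c) ∧
      ∀ (M : FGModuleCat.{v} B) (m : M), (z.app M).hom.hom m = c • m := by
  let σ : Shrink.{v} B ≃ₗ[B] B := Shrink.linearEquiv B B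
  have : Module.Finite B (Shrink.{v} B) := Module.Finite.equiv σ.symm
  let R : FGModuleCat.{v} B := FGModuleCat.of B (Shrink.{v} B)
  let c : B := σ ((z.app R).hom.hom (σ.symm 1))
  have key : ∀ (M : FGModuleCat.{v} B) (m : M), (z.app M).hom.hom m = c • m := by
    intro M m
    let f : R ⟶ M := FGModuleCat.ofHom (LinearMap.toSpanSingleton B M m ∘ₗ σ.toLinearMap)
    have h := congrArg (fun k : R ⟶ M => k.hom.hom (σ.symm 1)) (z.naturality f)
    have h1 : (z.app M).hom.hom (σ (σ.symm 1) • m) = c • m := h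
    rwa [LinearEquiv.apply_symm_apply, one_smul] at h1
  refine ⟨c, fun a => ?_, key⟩
  have h1 : (z.app R).hom.hom (σ.symm a) = c • σ.symm a := key R _
  have h2 : (z.app R).hom.hom (a • σ.symm 1) = a • (z.app R).hom.hom (σ.symm 1) :=
    (z.app R).hom.hom.map_smul a _
  rw [← map_smul, smul_eq_mul, mul_one, h1] at h2
  have h3 := congrArg σ h2
  rw [map_smul, LinearEquiv.apply_symm_apply] at h3
  exact h3.trans (σ.map_smul a _)

/-- A nonzero `A`-module can only live in a universe to which `A` is essentially small. -/
theorem small_of_nontrivial_module (𝕜 : Type u) [Field 𝕜]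
    (A : Type u) [Ring A] [Algebra 𝕜 A] [FiniteDimensional 𝕜 A] (M : Type v) [AddCommGroup M] [Module A M] [Nontrivial M] :
    Small.{v} A := by
  obtain ⟨m, hm⟩ := exists_ne (0 : M)
  have hinj : Function.Injective (fun t : 𝕜 => algebraMap 𝕜 A t • m) := by
    intro s t hst
    by_contra hne
    have h0 : algebraMap 𝕜 A (s - t) • m = 0 := by
      rw [map_sub, sub_smul]; exact sub_eq_zero.2 hst
    have h1 := congrArg (algebraMap 𝕜 A (s - t)⁻¹ • ·) h0
    simp only [smul_smul, ← map_mul, inv_mul_cancel₀ (sub_ne_zero.2 hne), map_one, one_smul,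
      smul_zero] at h1
    exact hm h1
  have : Small.{v} 𝕜 := small_of_injective hinj
  exact small_of_injective (Module.finBasis 𝕜 A).equivFun.injective

/-- A central element of a connected finite-dimensional algebra is invertible or nilpotent. If `c` is
central, its powers generate a stationary chain of ideals in the centre, say `c ^ (n + 1) * y = c ^ n`,
and then `(c * y) ^ (n + 1)` is a central idempotent, so it is `0` or `1`. -/
theorem central_isUnit_or_isNilpotent (𝕜 : Type u) [Field 𝕜]
    (A : Type u) [Ring A] [Algebra 𝕜 A] [FiniteDimensional 𝕜 A]
    (hconn : ∀ e : A, e * e = e → (∀ a : A, e * a = a * e) → e = 0 ∨ e = 1)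
    (c : A) (hc : ∀ a, c * a = a * c) : IsUnit c ∨ IsNilpotent c := by
  let Z := Subalgebra.center 𝕜 A
  have : IsArtinianRing Z := IsArtinianRing.of_finite 𝕜 Z
  let r : Z := ⟨c, Subalgebra.mem_center_iff.2 fun a => (hc a).symm⟩
  obtain ⟨n, y, hy⟩ := IsArtinian.exists_pow_succ_smul_dvd r (1 : Z)
  simp only [smul_eq_mul, mul_one] at hy
  have hk : ∀ k, r ^ n = r ^ n * (r * y) ^ k := by
    intro k
    induction k with
    | zero => simp
    | succ k ih =>
      rw [pow_succ, ← mul_assoc, ← ih, ← mul_assoc, ← pow_succ, hy]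
  -- The power `n + 1` rather than `n` keeps `c` a factor of the idempotent even when `n = 0`.
  let e : Z := (r * y) ^ (n + 1)
  have hre : r ^ (n + 1) * e = r ^ (n + 1) := by
    rw [pow_succ r n, mul_right_comm, ← hk]
  have hee : e * e = e := by
    change (r * y) ^ (n + 1) * e = (r * y) ^ (n + 1)
    rw [mul_pow, mul_right_comm, hre]
  rcases hconn e (by exact_mod_cast congrArg Subtype.val hee)
      (fun a => ((Subalgebra.mem_center_iff.1 e.2) a).symm) with h | h
  · right
    have h0 : e = 0 := Subtype.ext h
    rw [h0, mul_zero] at hre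
    exact ⟨n + 1, by simpa [r] using (congrArg Subtype.val hre).symm⟩
  · left
    have h1 : e = 1 := Subtype.ext h
    have : IsUnit (r * y) := (isUnit_pow_iff (Nat.succ_ne_zero n)).1 (by
      change IsUnit e
      rw [h1]; exact isUnit_one)
    exact (isUnit_of_mul_isUnit_left this).map Z.val

/-- If `A` is connected (its only central idempotents are `0` and `1`), then every
selfadjoint idempotent endofunctor of `A`-fdmod is isomorphic to the identity functor
or to the zero functor. -/
theorem selfadjoint_idempotent_of_connected (hbasic : IsBasicAlgebra 𝕜 A)
    (hconn : ∀ e : A, e * e = e → (∀ a : A, e * a = a * e) → e = 0 ∨ e = 1)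
    (F : FGModuleCat A ⥤ FGModuleCat A) (hF : IsSelfadjointFunctor A F)
    (hFF : Nonempty (F ⋙ F ≅ F)) :
    Nonempty (F ≅ 𝟭 (FGModuleCat A)) ∨ IsZero F := by
  obtain ⟨adj⟩ := hF
  obtain ⟨φ⟩ := hFF
  have : IsArtinianRing A := IsArtinianRing.of_finite 𝕜 A
  by_cases htriv : ∃ M : FGModuleCat A, Nontrivial M
  swap
  · right
    refine (Functor.isZero_iff F).2 fun M => (IsZero.iff_id_eq_zero _).2 ?_
    have : Subsingleton (F.obj M) := not_nontrivial_iff_subsingleton.1 fun h => htriv ⟨_, h⟩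
    ext x
    exact Subsingleton.elim (α := F.obj M) _ _
  obtain ⟨M₀, hM₀⟩ := htriv
  have := small_of_nontrivial_module 𝕜 A M₀
  obtain ⟨c, hc, hz⟩ := exists_central_of_endo_id (adj.unit ≫ adj.counit)
  -- `F (F (F M)) ≅ F M`
  let i : ∀ M, F.obj (F.obj (F.obj M)) ≅ F.obj M := fun M =>
    φ.app (F.obj M) ≪≫ φ.app M
  rcases central_isUnit_or_isNilpotent 𝕜 A hconn c hc with hu | ⟨n, hn⟩
  · left
    have hziso : ∀ M, IsIso (adj.unit.app M ≫ adj.counit.app M) := by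
      intro M
      obtain ⟨d, hdc⟩ := hu.exists_left_inv
      obtain ⟨d', hcd⟩ := hu.exists_right_inv
      have hb : Function.Bijective (adj.unit.app M ≫ adj.counit.app M).hom.hom := by
        have hz' : ∀ m : M, (adj.unit.app M ≫ adj.counit.app M).hom.hom m = c • m := hz M
        constructor
        · intro x y hxy
          rw [hz', hz'] at hxy
          simpa [smul_smul, hdc] using congrArg (d • ·) hxy
        · intro y
          exact ⟨d' • y, by rw [hz', smul_smul, hcd, one_smul]⟩
      exact ((LinearEquiv.ofBijective _ hb).toFGModuleCatIso).isIso_hom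
    have hret : ∀ M, adj.unit.app M ≫ (adj.counit.app M ≫
        inv (adj.unit.app M ≫ adj.counit.app M)) = 𝟙 M := by
      intro M
      rw [← Category.assoc, IsIso.hom_inv_id]
      rfl
    have hFu : ∀ M, IsIso (adj.unit.app (F.obj M)) := fun M =>
      isIso_of_retraction _ _ (hret (F.obj M)) (i M)
    have hunit : ∀ M, IsIso (adj.unit.app M) := by
      intro M
      have : IsSplitMono (adj.unit.app M) := ⟨⟨⟨_, hret M⟩⟩⟩
      have h1 : IsIso (adj.unit.app (F.obj (F.obj M))) := hFu _
      -- `F(ε_M)` is a split epi by a triangle identity, hence so is `F(F(ε_M))`.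
      have h2 : IsSplitEpi (F.map (adj.counit.app M)) :=
        ⟨⟨⟨_, adj.right_triangle_components M⟩⟩⟩
      have hnat : adj.counit.app M ≫ adj.unit.app M =
          adj.unit.app (F.obj (F.obj M)) ≫ F.map (F.map (adj.counit.app M)) :=
        adj.unit.naturality (adj.counit.app M)
      have h3 : Epi (adj.counit.app M ≫ adj.unit.app M) := by
        rw [hnat]; exact epi_comp _ _
      have : Epi (adj.unit.app M) := epi_of_epi (adj.counit.app M) _
      exact isIso_of_epi_of_isSplitMono _
    have : IsIso adj.unit := NatIso.isIso_of_isIso_app _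
    exact ⟨φ.symm ≪≫ (asIso adj.unit).symm⟩
  · right
    refine (Functor.isZero_iff F).2 fun M => ?_
    have : F.IsLeftAdjoint := adj.isLeftAdjoint
    have h1 : IsIso (F.map (adj.unit.app M)) :=
      isIso_of_retraction _ _ (adj.left_triangle_components M) (i M)
    have h2 : IsIso (F.map (adj.counit.app M)) := by
      have h : IsIso (adj.unit.app (F.obj M)) :=
        isIso_of_retraction _ _ (adj.right_triangle_components M) (i M)
      have h' : IsIso (adj.unit.app (F.obj M) ≫ F.map (adj.counit.app M)) := by
        rw [adj.right_triangle_components]; exact IsIso.id _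
      exact IsIso.of_isIso_comp_left (adj.unit.app (F.obj M)) _
    let z : End M := adj.unit.app M ≫ adj.counit.app M
    have hFz : IsUnit (F.mapEnd M z) := by
      rw [isUnit_iff_isIso]
      change IsIso (F.map (adj.unit.app M ≫ adj.counit.app M))
      rw [F.map_comp]
      infer_instance
    have hzpow : ∀ (k : ℕ) (m : M), (z ^ k : End M).hom.hom m = c ^ k • m := by
      intro k
      induction k with
      | zero => intro m; rw [pow_zero, pow_zero, one_smul]; rfl
      | succ k ih =>
        intro m
        rw [pow_succ, pow_succ, mul_smul, ← ih]
        have h := hz M m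
        change (z ^ k : End M).hom.hom (z.hom.hom m) = _
        exact congrArg _ h
    have hz0 : (z ^ n : End M) = (0 : M ⟶ M) := by
      refine FGModuleCat.hom_ext (LinearMap.ext fun m => ?_)
      exact (hzpow n m).trans (by rw [hn, zero_smul]; rfl)
    have hF0 : F.map (z ^ n : End M) = 0 := by rw [hz0]; exact F.map_zero _ _
    have hun : IsIso (F.map (z ^ n : End M)) := by
      have := hFz.pow n
      rw [← map_pow] at this
      exact (isUnit_iff_isIso _).1 this
    rw [hF0] at hun
    exact (IsZero.iff_id_eq_zero _).2 (isIsoZeroSelfEquiv _ hun)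

end
end

section
/- Let F and G be selfadjoint endofunctors of A-fdmod satisfying F∘F ≅ F and G∘G ≅ G. Then F∘G ≅ G∘F. -/
/-!
The composite `c = ε ≫ η : FF ⟶ FF` of the counit and the unit of an adjunction `F ⊣ F` is an
isomorphism whenever `F ∘ F ≅ F`. Indeed, the triangle identities make `F η_M` and `η_{FM}` split
monomorphisms `FM ⟶ FFFM`, and `FFFM ≅ FM`; as injective endomorphisms of finite-dimensional
modules are bijective, both are isomorphisms, and hence so are `F ε_M` and `F c_M`. If now
`g ≫ c_M = h ≫ c_M` for `g h : X ⟶ FFM`, then `F g = F h`, and `g = h` by adjunction, so `c_M` is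
a monomorphism and therefore an isomorphism.

Consequently `F ≅ FF` is a retract of the identity functor. Two retracts `F`, `G` of the identity
functor are the images of natural idempotents `e`, `f` of the identity; these commute by
naturality, and `FG` and `GF` are both the image of `e f = f e`.
-/

open CategoryTheory CategoryTheory.Limits

noncomputable section
set_option linter.unusedSectionVars false
set_option linter.unusedVariables false

universe u

variable (𝕜 : Type u) [Field 𝕜] [IsAlgClosed 𝕜]
variable (A : Type u) [Ring A] [Algebra 𝕜 A] [FiniteDimensional 𝕜 A]

universe v w

/-- Two functors which are retracts of the identity functor commute. -/
theorem nonempty_comp_iso_of_retracts {C : Type w} [Category.{v} C] {F G : C ⥤ C}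
    (i : F ⟶ 𝟭 C) (p : 𝟭 C ⟶ F) (hip : i ≫ p = 𝟙 F)
    (j : G ⟶ 𝟭 C) (q : 𝟭 C ⟶ G) (hjq : j ≫ q = 𝟙 G) :
    Nonempty (F ⋙ G ≅ G ⋙ F) := by
  have hip' : ∀ X, i.app X ≫ p.app X = 𝟙 _ := fun X => by
    simp [← NatTrans.comp_app, hip]
  have hjq' : ∀ X, j.app X ≫ q.app X = 𝟙 _ := fun X => by
    simp [← NatTrans.comp_app, hjq]
  have hi : ∀ {X Y : C} (f : X ⟶ Y), F.map f ≫ i.app Y = i.app X ≫ f :=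
    fun f => by simp
  have hj : ∀ {X Y : C} (f : X ⟶ Y), G.map f ≫ j.app Y = j.app X ≫ f :=
    fun f => by simp
  have hp : ∀ {X Y : C} (f : X ⟶ Y), p.app X ≫ F.map f = f ≫ p.app Y :=
    fun f => by simpa using (p.naturality f).symm
  have hq : ∀ {X Y : C} (f : X ⟶ Y), q.app X ≫ G.map f = f ≫ q.app Y :=
    fun f => by simpa using (q.naturality f).symm
  refine ⟨NatIso.ofComponents (fun M =>
    { hom := (j.app (F.obj M) ≫ F.map (q.app M) : G.obj (F.obj M) ⟶ F.obj (G.obj M))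
      inv := (i.app (G.obj M) ≫ G.map (p.app M) : F.obj (G.obj M) ⟶ G.obj (F.obj M))
      hom_inv_id := ?_
      inv_hom_id := ?_ }) ?_⟩
  · change (j.app (F.obj M) ≫ F.map (q.app M)) ≫ i.app (G.obj M) ≫ G.map (p.app M) = 𝟙 _
    rw [Category.assoc, reassoc_of% (hi (q.app M)), hq, reassoc_of% (hip' M), hjq']
  · change (i.app (G.obj M) ≫ G.map (p.app M)) ≫ j.app (F.obj M) ≫ F.map (q.app M) = 𝟙 _
    rw [Category.assoc, reassoc_of% (hj (p.app M)), hp, reassoc_of% (hjq' M), hip']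
  · intro X Y f
    change G.map (F.map f) ≫ j.app (F.obj Y) ≫ F.map (q.app Y) =
      (j.app (F.obj X) ≫ F.map (q.app X)) ≫ F.map (G.map f)
    rw [reassoc_of% (hj (F.map f)), Category.assoc, ← F.map_comp, ← F.map_comp, hq]

/-- If every monic endomorphism in `C` is invertible, an idempotent selfadjoint endofunctor of `C`
is a retract of the identity functor. -/
theorem exists_retract_of_adj {C : Type w} [Category.{v} C]
    (hC : ∀ {X : C} (f : X ⟶ X), Mono f → IsIso f)
    {F : C ⥤ C} (adj : F ⊣ F) (α : F ⋙ F ≅ F) :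
    ∃ (i : F ⟶ 𝟭 C) (p : 𝟭 C ⟶ F), i ≫ p = 𝟙 F := by
  have key : ∀ {X Y : C} (f : X ⟶ Y) (_ : Y ≅ X), Mono f → IsIso f := by
    intro X Y f e hf
    have : IsIso (f ≫ e.hom) := hC _ inferInstance
    exact IsIso.of_isIso_comp_right f e.hom
  let β : ∀ M, F.obj (F.obj (F.obj M)) ≅ F.obj M := fun M =>
    α.app (F.obj M) ≪≫ α.app M
  have tri1 : ∀ M, F.map (adj.unit.app M) ≫ adj.counit.app (F.obj M) = 𝟙 _ :=
    adj.left_triangle_components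
  have tri2 : ∀ M, adj.unit.app (F.obj M) ≫ F.map (adj.counit.app M) = 𝟙 _ :=
    adj.right_triangle_components
  have h1 : ∀ M, IsIso (F.map (adj.unit.app M)) := fun M =>
    key _ (β M) (mono_of_mono_fac (tri1 M))
  have h2 : ∀ M, IsIso (F.map (adj.counit.app M)) := fun M => by
    have : IsIso (adj.unit.app (F.obj M)) := key _ (β M) (mono_of_mono_fac (tri2 M))
    rw [(IsIso.eq_inv_of_hom_inv_id (tri2 M) : F.map (adj.counit.app M) = _)]
    infer_instance
  have hc : ∀ M, IsIso ((adj.counit ≫ adj.unit).app M) := by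
    intro M
    have hFc : IsIso (F.map ((adj.counit ≫ adj.unit).app M)) := by
      have := h1 M
      have := h2 M
      rw [NatTrans.comp_app, F.map_comp]
      exact IsIso.comp_isIso' (h2 M) (h1 M)
    refine hC (X := F.obj (F.obj M)) _ ⟨fun {X} g h hgh => ?_⟩
    have hF : F.map g = F.map h := by
      rw [← cancel_mono (F.map ((adj.counit ≫ adj.unit).app M))]
      erw [← F.map_comp, ← F.map_comp, hgh]
    apply (adj.homEquiv X (F.obj M)).symm.injective
    rw [Adjunction.homEquiv_counit, Adjunction.homEquiv_counit, hF]
  have : IsIso (adj.counit ≫ adj.unit) := NatIso.isIso_of_isIso_app _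
  refine ⟨α.inv ≫ adj.counit, adj.unit ≫ inv (adj.counit ≫ adj.unit) ≫ α.hom, ?_⟩
  have h := IsIso.hom_inv_id_assoc (adj.counit ≫ adj.unit) α.hom
  simp only [Category.assoc] at h ⊢
  rw [h, α.inv_hom_id]

theorem FGModuleCat.isIso_of_mono_endo {R : Type u} [Ring R] [IsArtinianRing R]
    {M : FGModuleCat.{v} R} (f : M ⟶ M) (hf : Mono f) : IsIso f := by
  have hinj : Function.Injective f.hom.hom := by
    -- Test `f` against its kernel, which is finitely generated and lies in the universe of `M`.
    let K := LinearMap.ker f.hom.hom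
    let ι : FGModuleCat.of R K ⟶ M := FGModuleCat.ofHom K.subtype
    have hι : ι = FGModuleCat.ofHom 0 := by
      rw [← cancel_mono f]
      ext x
      exact (LinearMap.mem_ker.1 x.2).trans (map_zero f.hom.hom).symm
    rw [← LinearMap.ker_eq_bot, LinearMap.ker_eq_bot']
    intro m hm
    exact congrArg (fun g => g.hom.hom (⟨m, hm⟩ : K)) hι
  have hbij := IsArtinian.bijective_of_injective_endomorphism f.hom.hom hinj
  exact (LinearEquiv.toFGModuleCatIso (LinearEquiv.ofBijective f.hom.hom hbij)).isIso_hom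

/-- Any two selfadjoint idempotent endofunctors of `A`-fdmod commute up to isomorphism. -/
theorem selfadjoint_idempotents_commute (hbasic : IsBasicAlgebra 𝕜 A)
    (F G : FGModuleCat A ⥤ FGModuleCat A)
    (hF : IsSelfadjointFunctor A F) (hG : IsSelfadjointFunctor A G)
    (hFF : Nonempty (F ⋙ F ≅ F)) (hGG : Nonempty (G ⋙ G ≅ G)) :
    Nonempty (F ⋙ G ≅ G ⋙ F) := by
  obtain ⟨adjF⟩ := hF
  obtain ⟨adjG⟩ := hG
  obtain ⟨α⟩ := hFF
  obtain ⟨β⟩ := hGG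
  have : IsArtinianRing A := IsArtinianRing.of_finite 𝕜 A
  obtain ⟨i, p, hip⟩ := exists_retract_of_adj FGModuleCat.isIso_of_mono_endo adjF α
  obtain ⟨j, q, hjq⟩ := exists_retract_of_adj FGModuleCat.isIso_of_mono_endo adjG β
  exact nonempty_comp_iso_of_retracts i p hip j q hjq

end
end

section
/- Let F be a selfadjoint endofunctor of A-fdmod and k ≥ 1 a natural number. If the k-fold composition F^{∘k} is isomorphic to the zero functor, then F itself is isomorphic to the zero functor (equivalently, F M = 0 for every finite-dimensional A-module M). -/
/-!
For every object `X`, the adjunction gives `Hom(F X, F X) ≃ Hom(X, F (F X))`. If `F (F X)` is zero,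
the right-hand side has one element, so the identity of `F X` is the zero morphism and `F X` is
zero. Applied to `X = F^n M`, this shows that `F^{n+2} = 0` implies `F^{n+1} = 0`, and descending
induction on the exponent gives `F = 0`. The argument works for finitely generated modules over an
arbitrary ring.
-/

open CategoryTheory CategoryTheory.Limits

noncomputable section
set_option linter.unusedSectionVars false
set_option linter.unusedVariables false

universe u

variable (𝕜 : Type u) [Field 𝕜] [IsAlgClosed 𝕜]
variable (A : Type u) [Ring A] [Algebra 𝕜 A] [FiniteDimensional 𝕜 A]

/-- The `k`-fold composition of an endofunctor with itself
(`iterComp A F 0` is the identity functor). -/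
def iterComp (F : FGModuleCat A ⥤ FGModuleCat A) : ℕ → (FGModuleCat A ⥤ FGModuleCat A)
  | 0 => 𝟭 _
  | n + 1 => iterComp F n ⋙ F

theorem isZero_obj_of_isZero_obj_obj {C : Type*} [Category C] [HasZeroMorphisms C] {F : C ⥤ C}
    (adj : F ⊣ F) (X : C) (h : IsZero (F.obj (F.obj X))) : IsZero (F.obj X) := by
  rw [IsZero.iff_id_eq_zero]
  exact (adj.homEquiv X (F.obj X)).injective (h.eq_of_tgt _ _)

theorem isZero_obj_of_iterComp_succ {F : FGModuleCat A ⥤ FGModuleCat A} (adj : F ⊣ F) (n : ℕ)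
    (h : ∀ M, IsZero ((iterComp A F (n + 1)).obj M)) (M : FGModuleCat A) : IsZero (F.obj M) := by
  induction n with
  | zero => exact h M
  | succ n ih =>
    exact ih fun N => isZero_obj_of_isZero_obj_obj adj ((iterComp A F n).obj N) (h N)

/-- The trivial module is a zero object; it is needed to test whether a functor into `A`-fdmod is
zero on objects. -/
theorem hasZeroObject_fgModuleCat : HasZeroObject (FGModuleCat A) :=
  ⟨FGModuleCat.of A PUnit, by
    rw [IsZero.iff_id_eq_zero]
    ext x⟩

/-- A selfadjoint endofunctor of `A`-fdmod some power of which is the zero functor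
is itself the zero functor. -/
theorem selfadjoint_nilpotent_is_zero (hbasic : IsBasicAlgebra 𝕜 A)
    (F : FGModuleCat A ⥤ FGModuleCat A) (hF : IsSelfadjointFunctor A F)
    (k : ℕ) (hk : 1 ≤ k) (hzero : IsZero (iterComp A F k)) :
    IsZero F := by
  have := hasZeroObject_fgModuleCat A
  obtain ⟨adj⟩ := hF
  obtain ⟨n, rfl⟩ := Nat.exists_eq_add_of_le' hk
  exact Functor.isZero F
    (isZero_obj_of_iterComp_succ A adj n ((Functor.isZero_iff _).1 hzero))

end
end

section
/- Let F be a selfadjoint endofunctor of A-fdmod and let k > m ≥ 1 be natural numbers with k − m odd. If F^{∘k} ≅ F^{∘m}, then F∘F ≅ F. -/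
/-!
Write `η` and `ε` for the unit and counit of `F ⊣ F`. Three observations prove the theorem.

* By a triangle identity, `η` is split mono at every object of the form `F Y`. Hence for `m ≥ 1`
  it gives split monos `F^m X ⟶ F^(m+2) X ⟶ F^(m+4) X ⟶ ⋯`. The isomorphism `F^k ≅ F^m`, used
  twice, gives `F^(m+2(k-m)) ≅ F^m`, so the composite of such a chain is a split mono endomorphism
  of `F^m X`. Finitely generated modules over a Noetherian ring are Dedekind finite (one-sided
  inverses of endomorphisms are two-sided), so the first map `η` at `F^m X` is invertible
  (`unit_iterate_isIso`).
* `F` is injective on morphisms out of, and on morphisms into, an object `F Z`, because such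
  morphisms are recovered from their image under `F` through the adjunction. Therefore
  invertibility of `η` at `F² Y` forces invertibility of `ε` at `F Y`, and vice versa; descending,
  `η` or `ε` is invertible on the image of `F`. In both cases `F³ ≅ F` (`cube_iso`).
* Hence for `n ≥ 1` the functor `F^n` depends only on the parity of `n`, and `k - m` odd turns
  `F^k ≅ F^m` into `F² ≅ F`.
-/

open CategoryTheory CategoryTheory.Limits

noncomputable section
set_option linter.unusedSectionVars false
set_option linter.unusedVariables false

universe u

variable (𝕜 : Type u) [Field 𝕜] [IsAlgClosed 𝕜]
variable (A : Type u) [Ring A] [Algebra 𝕜 A] [FiniteDimensional 𝕜 A]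

section SelfAdjoint

variable {C : Type*} [Category C] {F : C ⥤ C}

/-- The `n`-fold iterate of an endofunctor of any category, defined by the recursion of
`iterComp`. -/
def iterFun (F : C ⥤ C) : ℕ → (C ⥤ C)
  | 0 => 𝟭 _
  | n + 1 => iterFun F n ⋙ F

/-- A category in which every one-sided inverse of an endomorphism is two-sided. -/
def DedekindFiniteCat (C : Type*) [Category C] : Prop :=
  ∀ (X : C) (f r : X ⟶ X), f ≫ r = 𝟙 X → r ≫ f = 𝟙 X

theorem map_injective_out (adj : F ⊣ F) {Z W : C} {g h : F.obj Z ⟶ W}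
    (e : F.map g = F.map h) : g = h := by
  apply (adj.homEquiv Z W).injective
  simp [adj.homEquiv_unit, e]

theorem map_injective_into (adj : F ⊣ F) {Z W : C} {g h : W ⟶ F.obj Z}
    (e : F.map g = F.map h) : g = h := by
  apply (adj.homEquiv W Z).symm.injective
  simp [adj.homEquiv_counit, e]

theorem counit_isIso_of_unit (adj : F ⊣ F) (Y : C)
    (h : IsIso (adj.unit.app (F.obj (F.obj Y)))) : IsIso (adj.counit.app (F.obj Y)) := by
  have h1 : F.map (adj.unit.app Y) ≫ adj.counit.app (F.obj Y) = 𝟙 _ :=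
    adj.left_triangle_components Y
  have h2 : adj.unit.app (F.obj (F.obj Y)) ≫ F.map (adj.counit.app (F.obj Y)) = 𝟙 _ :=
    adj.right_triangle_components (F.obj Y)
  -- `F ε` is the inverse of `η`, so its one-sided inverse `F F η` is two-sided.
  have h3 : IsIso (F.map (adj.counit.app (F.obj Y))) := by
    rw [← IsIso.inv_eq_of_hom_inv_id h2]; infer_instance
  refine ⟨F.map (adj.unit.app Y), ?_, h1⟩
  apply map_injective_out adj
  have h4 := congrArg F.map h1
  rw [F.map_comp, F.map_id] at h4
  rw [F.map_comp, ← cancel_mono (F.map (adj.counit.app (F.obj Y))), Category.assoc, h4]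
  simp

theorem unit_isIso_of_counit (adj : F ⊣ F) (Y : C)
    (h : IsIso (adj.counit.app (F.obj (F.obj Y)))) : IsIso (adj.unit.app (F.obj Y)) := by
  have h1 : adj.unit.app (F.obj Y) ≫ F.map (adj.counit.app Y) = 𝟙 _ :=
    adj.right_triangle_components Y
  have h2 : F.map (adj.unit.app (F.obj Y)) ≫ adj.counit.app (F.obj (F.obj Y)) = 𝟙 _ :=
    adj.left_triangle_components (F.obj Y)
  have h3 : IsIso (F.map (adj.unit.app (F.obj Y))) := by
    rw [← IsIso.inv_eq_of_inv_hom_id h2]; infer_instance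
  refine ⟨F.map (adj.counit.app Y), h1, ?_⟩
  apply map_injective_into adj
  have h4 := congrArg F.map h1
  rw [F.map_comp, F.map_id] at h4
  rw [F.map_comp, ← cancel_epi (F.map (adj.unit.app (F.obj Y))), ← Category.assoc, h4]
  simp

/-- Invertibility of `η` or `ε` on the image of a positive power of `F` descends to the image of
`F`; each step down exchanges the roles of `η` and `ε`. -/
theorem descend (adj : F ⊣ F) (n : ℕ)
    (h : (∀ X, IsIso (adj.unit.app (F.obj ((iterFun F n).obj X)))) ∨
      (∀ X, IsIso (adj.counit.app (F.obj ((iterFun F n).obj X))))) :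
    (∀ X, IsIso (adj.unit.app (F.obj X))) ∨ (∀ X, IsIso (adj.counit.app (F.obj X))) := by
  induction n with
  | zero => exact h
  | succ n ih =>
    apply ih
    rcases h with h | h
    · exact Or.inr fun X => counit_isIso_of_unit adj _ (h X)
    · exact Or.inl fun X => unit_isIso_of_counit adj _ (h X)

/-- Composites of units give a split mono `F^(n+1) X ⟶ F^(n+1+2d) X`. -/
theorem chain_split (adj : F ⊣ F) (n d : ℕ) (X : C) :
    ∃ (b : (iterFun F (n + 1)).obj X ⟶ (iterFun F (n + 1 + 2 * d)).obj X)
      (r : (iterFun F (n + 1 + 2 * d)).obj X ⟶ (iterFun F (n + 1)).obj X), b ≫ r = 𝟙 _ := by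
  induction d with
  | zero => exact ⟨𝟙 _, 𝟙 _, Category.comp_id _⟩
  | succ d ih =>
    obtain ⟨b, r, hbr⟩ := ih
    have key : ∀ N, ∃ (a : (iterFun F (N + 1)).obj X ⟶ (iterFun F (N + 3)).obj X)
        (s : (iterFun F (N + 3)).obj X ⟶ (iterFun F (N + 1)).obj X), a ≫ s = 𝟙 _ := fun N =>
      ⟨adj.unit.app (F.obj ((iterFun F N).obj X)),
        F.map (adj.counit.app ((iterFun F N).obj X)),
        adj.right_triangle_components _⟩
    have h := key (n + 2 * d)
    rw [show n + 2 * d + 1 = n + 1 + 2 * d by ring] at h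
    obtain ⟨a, s, has⟩ := h
    rw [show n + 1 + 2 * (d + 1) = n + 2 * d + 3 by ring]
    refine ⟨b ≫ a, s ≫ r, ?_⟩
    rw [Category.assoc, reassoc_of% has, hbr]

theorem iterFun_add_iso {p q : ℕ} (e : iterFun F p ≅ iterFun F q) (j : ℕ) :
    Nonempty (iterFun F (p + j) ≅ iterFun F (q + j)) := by
  induction j with
  | zero => exact ⟨e⟩
  | succ j ih => exact ih.map fun i => Functor.isoWhiskerRight i F

theorem unit_iterate_isIso (hC : DedekindFiniteCat C) (adj : F ⊣ F) (n d : ℕ)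
    (e : iterFun F (n + 1 + 2 * (d + 1)) ≅ iterFun F (n + 1)) (X : C) :
    IsIso (adj.unit.app (F.obj ((iterFun F n).obj X))) := by
  have h := chain_split adj (n + 2) d X
  rw [show n + 2 + 1 + 2 * d = n + 1 + 2 * (d + 1) by ring] at h
  obtain ⟨b, r, hbr⟩ := h
  let a : (iterFun F (n + 1)).obj X ⟶ (iterFun F (n + 2 + 1)).obj X :=
    adj.unit.app (F.obj ((iterFun F n).obj X))
  let s : (iterFun F (n + 2 + 1)).obj X ⟶ (iterFun F (n + 1)).obj X :=
    F.map (adj.counit.app ((iterFun F n).obj X))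
  have has : a ≫ s = 𝟙 _ := adj.right_triangle_components _
  let i := e.app X
  have h1 := hC _ (a ≫ b ≫ i.hom) (i.inv ≫ r ≫ s) (by
    simp only [Category.assoc, Iso.hom_inv_id_assoc]
    rw [reassoc_of% hbr, has])
  have h2 : r ≫ s ≫ a ≫ b = 𝟙 _ := by
    have := congrArg (fun t => i.hom ≫ t ≫ i.inv) h1
    simpa using this
  -- Conjugating by `b` and its retraction `r` removes the tail of the chain.
  have h3 : s ≫ a = 𝟙 _ := by
    have := congrArg (fun t => b ≫ t ≫ r) h2
    simp only [Category.assoc, Category.id_comp] at this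
    rw [hbr, reassoc_of% hbr] at this
    simpa using this
  exact ⟨s, has, h3⟩

theorem cube_iso (hC : DedekindFiniteCat C) (adj : F ⊣ F) (n d : ℕ)
    (e : iterFun F (n + 1 + 2 * (d + 1)) ≅ iterFun F (n + 1)) :
    Nonempty (F ⋙ F ⋙ F ≅ F) := by
  rcases descend adj n (Or.inl (unit_iterate_isIso hC adj n d e)) with h | h
  · exact ⟨(NatIso.ofComponents (fun X => @asIso _ _ _ _ (adj.unit.app (F.obj X)) (h X))
      (fun f => adj.unit.naturality (F.map f))).symm⟩
  · exact ⟨NatIso.ofComponents (fun X => @asIso _ _ _ _ (adj.counit.app (F.obj X)) (h X))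
      (fun f => adj.counit.naturality (F.map f))⟩

theorem iterFun_parity (c : F ⋙ F ⋙ F ≅ F) (n j : ℕ) :
    Nonempty (iterFun F (n + 1 + 2 * j) ≅ iterFun F (n + 1)) := by
  induction j with
  | zero => exact ⟨Iso.refl _⟩
  | succ j ih =>
    obtain ⟨i⟩ := ih
    rw [show n + 1 + 2 * (j + 1) = n + 2 * j + 3 by ring]
    rw [show n + 1 + 2 * j = n + 2 * j + 1 by ring] at i
    exact ⟨Functor.isoWhiskerLeft (iterFun F (n + 2 * j)) c ≪≫ i⟩

theorem square_iso (hC : DedekindFiniteCat C) (adj : F ⊣ F) (k m : ℕ) (hm : 1 ≤ m) (hmk : m < k)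
    (hodd : Odd (k - m)) (e : iterFun F k ≅ iterFun F m) : Nonempty (F ⋙ F ≅ F) := by
  obtain ⟨t, ht⟩ := hodd
  obtain ⟨n, rfl⟩ : ∃ n, m = n + 1 := ⟨m - 1, by omega⟩
  obtain rfl : k = n + 1 + (2 * t + 1) := by omega
  obtain ⟨e'⟩ := iterFun_add_iso e (2 * t + 1)
  have e2 := e' ≪≫ e
  rw [show n + 1 + (2 * t + 1) + (2 * t + 1) = n + 1 + 2 * (2 * t + 1) by ring] at e2
  obtain ⟨c⟩ := cube_iso hC adj n (2 * t) e2
  let one : iterFun F 1 ≅ F := F.leftUnitor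
  let two : iterFun F 2 ≅ F ⋙ F := Functor.isoWhiskerRight F.leftUnitor F
  rcases Nat.even_or_odd' n with ⟨s, rfl | rfl⟩
  · obtain ⟨i⟩ := iterFun_parity c 0 s
    obtain ⟨j⟩ := iterFun_parity c 1 (s + t)
    rw [show 0 + 1 + 2 * s = 2 * s + 1 by ring] at i
    rw [show 1 + 1 + 2 * (s + t) = 2 * s + 1 + (2 * t + 1) by ring] at j
    exact ⟨two.symm ≪≫ j.symm ≪≫ e ≪≫ i ≪≫ one⟩
  · obtain ⟨i⟩ := iterFun_parity c 1 s
    obtain ⟨j⟩ := iterFun_parity c 0 (s + t + 1)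
    rw [show 1 + 1 + 2 * s = 2 * s + 1 + 1 by ring] at i
    rw [show 0 + 1 + 2 * (s + t + 1) = 2 * s + 1 + 1 + (2 * t + 1) by ring] at j
    exact ⟨two.symm ≪≫ i.symm ≪≫ e.symm ≪≫ j ≪≫ one⟩

end SelfAdjoint

theorem fgModuleCat_dedekindFinite (R : Type u) [Ring R] [IsNoetherianRing R] :
    DedekindFiniteCat (FGModuleCat R) := by
  intro X f r h
  have h1 : ∀ x, r.hom.hom (f.hom.hom x) = x := fun x =>
    congrArg (fun t : X ⟶ X => t.hom.hom x) h
  have hinj : Function.Injective r.hom.hom :=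
    OrzechProperty.injective_of_surjective_endomorphism r.hom.hom fun x => ⟨_, h1 x⟩
  ext x
  exact hinj (h1 _)

theorem iterComp_eq_iterFun (R : Type u) [Ring R] (F : FGModuleCat R ⥤ FGModuleCat R) (n : ℕ) :
    iterComp R F n = iterFun F n := by
  induction n with
  | zero => rfl
  | succ n ih => simp only [iterComp, iterFun, ih]

/-- Let `F` be a selfadjoint endofunctor of `A`-fdmod with `F^k ≅ F^m` where
`k > m ≥ 1` and `k - m` is odd.  Then `F ∘ F ≅ F`. -/
theorem selfadjoint_cyclic_odd_idempotent (hbasic : IsBasicAlgebra 𝕜 A)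
    (F : FGModuleCat A ⥤ FGModuleCat A) (hF : IsSelfadjointFunctor A F)
    (k m : ℕ) (hm : 1 ≤ m) (hmk : m < k) (hodd : Odd (k - m))
    (hiso : Nonempty (iterComp A F k ≅ iterComp A F m)) :
    Nonempty (F ⋙ F ≅ F) := by
  obtain ⟨adj⟩ := hF
  obtain ⟨e⟩ := hiso
  rw [iterComp_eq_iterFun, iterComp_eq_iterFun] at e
  have : IsNoetherianRing A := IsNoetherianRing.of_finite 𝕜 A
  exact square_iso (fgModuleCat_dedekindFinite A) adj k m hm hmk hodd e

end
end
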